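/- (Algebraic core of Theorem 3.2) There do not exist real numbers m, c2, a5, c3, x1 and a natural number p satisfying all of: m ≥ 3; 0 < c2 ≤ m − 1; a5 ≥ 0; c3 > 0; m·(m−1−c2) − a5·c3 ≥ 0; m − 1 < x1 < m; x1^3 − (m−1−c2)·x1^2 − (m + c2·(m−1))·x1 + m·(m−1−c2) − a5·c3 = 0; 3·x1^2 − 2·(m−1−c2)·x1 − m − c2·(m−1) > 0; and (p + 1)·(3·x1^2 − 2·(m−1−c2)·x1 − m − c2·(m−1)) = (m+1)·(x1^2 − (m−1−c2)·x1 − c2·(m−1)). -/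

import Mathlib

/-!
Write `c = c2`, `x = x1`, `e = m (m - 1 - c) - a5 c3 ≥ 0`, let `D` be the derivative of the cubic
at `x`, and let `N = x² - (m - 1 - c) x - c (m - 1)`.

The cubic equation reads `x N = m x - e`, so `N ≤ m`. Moreover `D = 2 N + x² - m + c (m - 1)`.
If `p ≥ 1`, then `2 D ≤ (m + 1) N` gives `2 (x² - m) < (m - 3) N ≤ (m - 3) m`, which is impossible
because `x > m - 1`. If `p = 0`, then `D = (m + 1) N` factors as
`(m - x) (c (m - 1) + (m - 2) x - 1) = 0`, although both factors are positive.
-/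

/-- Algebraic core of Theorem 3.2: the constraints extracted from a hypothetical
exceptional imprimitive Q-polynomial scheme with six classes are contradictory. -/
theorem algebraic_core_no_scheme :
    ¬ ∃ (m c2 a5 c3 x1 : ℝ) (p : ℕ),
      m ≥ 3 ∧ 0 < c2 ∧ c2 ≤ m - 1 ∧ a5 ≥ 0 ∧ c3 > 0 ∧
      m * (m - 1 - c2) - a5 * c3 ≥ 0 ∧
      m - 1 < x1 ∧ x1 < m ∧
      x1 ^ 3 - (m - 1 - c2) * x1 ^ 2 - (m + c2 * (m - 1)) * x1 +
          m * (m - 1 - c2) - a5 * c3 = 0 ∧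
      3 * x1 ^ 2 - 2 * (m - 1 - c2) * x1 - m - c2 * (m - 1) > 0 ∧
      ((p : ℝ) + 1) * (3 * x1 ^ 2 - 2 * (m - 1 - c2) * x1 - m - c2 * (m - 1)) =
        (m + 1) * (x1 ^ 2 - (m - 1 - c2) * x1 - c2 * (m - 1)) := by
  rintro ⟨m, c2, a5, c3, x1, p, hm, hc, -, -, -, he, hx, hxm, hcubic, hD, hp⟩
  have hx0 : 0 < x1 := by linarith
  have hN : x1 ^ 2 - (m - 1 - c2) * x1 - c2 * (m - 1) ≤ m :=
    le_of_mul_le_mul_left (by linarith) hx0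
  rcases Nat.eq_zero_or_pos p with rfl | hpos
  · have hzero : (m - x1) * (c2 * (m - 1) + ((m - 2) * x1 - 1)) = 0 := by
      push_cast at hp
      linear_combination hp
    have hcm : 0 < c2 * (m - 1) := mul_pos hc (by linarith)
    have hlin : 0 < (m - 2) * x1 - 1 := by nlinarith
    exact (mul_pos (sub_pos.2 hxm) (add_pos hcm hlin)).ne' hzero
  · have hp1 : (1 : ℝ) ≤ p := by exact_mod_cast hpos
    have h2 := mul_le_mul_of_nonneg_right (add_le_add_left hp1 1) hD.le
    have hbound := mul_le_mul_of_nonneg_left hN (sub_nonneg.2 hm)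
    have hcm : 0 < c2 * (m - 1) := mul_pos hc (by linarith)
    have hsq : (m - 1) ^ 2 < x1 ^ 2 := by gcongr; linarith
    nlinarith
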